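/- Under the hypotheses of the policy improvement theorem (policies π, π̂ : X × ℝ^k → ℝ^k each γ-Lipschitz in the action component with γ ∈ (0,1); ℓ : ℝ^k → ℝ convex and L-Lipschitz; roll-outs a_t = π(x_t, a_{t−1}) and a'_t = π'(x_t, a'_{t−1}) from common initial action a₀ where π' = β·π̂ + (1−β)·π; and ε ≥ 0 with ‖π̂(x_t, a_{t−1}) − π(x_t, a_{t−1})‖ ≤ ε for all t), define Δ = (1/T)·Σ_{t=1}^T ℓ(a_t) − (1/T)·Σ_{t=1}^T ℓ(π̂(x_t, a_{t−1})) and δ = γ·ε·L / (1−γ). If Δ > δ and the step size is chosen as β = (Δ − δ)/(2Δ), then (1/T)·Σ_{t=1}^T ℓ(a'_t) − (1/T)·Σ_{t=1}^T ℓ(a_t) ≤ −(Δ − δ)² / (2·(Δ + δ)), i.e. the interpolated policy strictly improves. -/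

import Mathlib

/-- Corollary 2 of the paper (monotonic improvement): under the hypotheses of the
policy improvement theorem, with `Δ = ℓ_π(π) − ℓ_π(π̂)` and `δ = γεL/(1−γ)`, if
`Δ > δ` and the step size is chosen as `β = (Δ − δ)/(2Δ)`, then the interpolated
policy `π' = β·π̂ + (1−β)·π` strictly improves:
`ℓ_{π'}(π') − ℓ_π(π) ≤ −(Δ − δ)²/(2(Δ + δ))`. -/
theorem monotonic_improvement {X : Type*} {k : ℕ}
    (π πhat : X × EuclideanSpace ℝ (Fin k) → EuclideanSpace ℝ (Fin k))
    (γ : ℝ) (hγ : γ ∈ Set.Ioo (0 : ℝ) 1)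
    (hπ : ∀ (x : X) (a a' : EuclideanSpace ℝ (Fin k)),
      ‖π (x, a) - π (x, a')‖ ≤ γ * ‖a - a'‖)
    (hπhat : ∀ (x : X) (a a' : EuclideanSpace ℝ (Fin k)),
      ‖πhat (x, a) - πhat (x, a')‖ ≤ γ * ‖a - a'‖)
    (ℓ : EuclideanSpace ℝ (Fin k) → ℝ)
    (hconv : ConvexOn ℝ Set.univ ℓ)
    (L : ℝ) (hL0 : 0 ≤ L)
    (hlip : ∀ u v : EuclideanSpace ℝ (Fin k), |ℓ u - ℓ v| ≤ L * ‖u - v‖)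
    (T : ℕ) (hT : 1 ≤ T) (x : ℕ → X) (a₀ : EuclideanSpace ℝ (Fin k))
    (a : ℕ → EuclideanSpace ℝ (Fin k)) (ha0 : a 0 = a₀)
    (ha : ∀ t : ℕ, a (t + 1) = π (x (t + 1), a t))
    (ε : ℝ) (hε : 0 ≤ ε)
    (hclose : ∀ t : ℕ, 1 ≤ t → t ≤ T →
      ‖πhat (x t, a (t - 1)) - π (x t, a (t - 1))‖ ≤ ε)
    (Δ δ : ℝ)
    (hΔ : Δ = (1 / T : ℝ) * ∑ t ∈ Finset.Icc 1 T, ℓ (a t)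
      - (1 / T : ℝ) * ∑ t ∈ Finset.Icc 1 T, ℓ (πhat (x t, a (t - 1))))
    (hδ : δ = γ * ε * L / (1 - γ))
    (hΔδ : δ < Δ)
    (β : ℝ) (hβ : β = (Δ - δ) / (2 * Δ))
    (π' : X × EuclideanSpace ℝ (Fin k) → EuclideanSpace ℝ (Fin k))
    (hπ' : ∀ (x : X) (a : EuclideanSpace ℝ (Fin k)),
      π' (x, a) = β • πhat (x, a) + (1 - β) • π (x, a))
    (a' : ℕ → EuclideanSpace ℝ (Fin k)) (ha'0 : a' 0 = a₀)
    (ha' : ∀ t : ℕ, a' (t + 1) = π' (x (t + 1), a' t)) :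
    (1 / T : ℝ) * ∑ t ∈ Finset.Icc 1 T, ℓ (a' t)
      - (1 / T : ℝ) * ∑ t ∈ Finset.Icc 1 T, ℓ (a t)
    ≤ -((Δ - δ) ^ 2 / (2 * (Δ + δ))) := by
  obtain ⟨hγ0, hγ1⟩ := hγ
  have h1γ : 0 < 1 - γ := by linarith
  have hδ0 : 0 ≤ δ := by rw [hδ]; positivity
  have hΔ0 : 0 < Δ := by linarith
  have hβ0 : 0 ≤ β := by
    rw [hβ]; exact div_nonneg (by linarith) (by linarith)
  have hβ1 : 0 ≤ 1 - β := by
    have : β ≤ 1 := by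
      rw [hβ, div_le_one (by linarith)]; linarith
    linarith
  have hlipπ' : ∀ (y : X) (u v : EuclideanSpace ℝ (Fin k)),
      ‖π' (y, u) - π' (y, v)‖ ≤ γ * ‖u - v‖ := by
    intro y u v
    have e : π' (y, u) - π' (y, v)
        = β • (πhat (y, u) - πhat (y, v)) + (1 - β) • (π (y, u) - π (y, v)) := by
      rw [hπ', hπ']; module
    rw [e]
    refine (norm_add_le _ _).trans ?_
    rw [norm_smul, norm_smul, Real.norm_of_nonneg hβ0, Real.norm_of_nonneg hβ1]
    have h1 := mul_le_mul_of_nonneg_left (hπhat y u v) hβ0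
    have h2 := mul_le_mul_of_nonneg_left (hπ y u v) hβ1
    linarith
  have hdev : ∀ t : ℕ, t ≤ T → ‖a' t - a t‖ ≤ β * ε / (1 - γ) := by
    intro t
    induction t with
    | zero => intro _; rw [ha0, ha'0, sub_self, norm_zero]; positivity
    | succ n ih =>
      intro hn
      have ih' := ih (by omega)
      have hc := hclose (n + 1) (by omega) hn
      rw [Nat.add_sub_cancel] at hc
      have e : a' (n + 1) - a (n + 1)
          = (π' (x (n + 1), a' n) - π' (x (n + 1), a n))
            + β • (πhat (x (n + 1), a n) - π (x (n + 1), a n)) := by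
        rw [ha', ha, hπ' _ (a n)]; module
      rw [e]
      refine (norm_add_le _ _).trans ?_
      rw [norm_smul, Real.norm_of_nonneg hβ0]
      have h1 := hlipπ' (x (n + 1)) (a' n) (a n)
      have h2 := mul_le_mul_of_nonneg_left hc hβ0
      have h3 := mul_le_mul_of_nonneg_left ih' hγ0.le
      have h4 : γ * (β * ε / (1 - γ)) + β * ε = β * ε / (1 - γ) := by
        field_simp; ring
      linarith
  have hstep : ∀ t ∈ Finset.Icc 1 T,
      ℓ (a' t) ≤ β * ℓ (πhat (x t, a (t - 1))) + (1 - β) * ℓ (a t) + β * δ := by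
    intro t ht
    obtain ⟨h1t, htT⟩ := Finset.mem_Icc.mp ht
    obtain ⟨n, rfl⟩ : ∃ n, t = n + 1 := ⟨t - 1, by omega⟩
    rw [Nat.add_sub_cancel]
    have hc := hconv.2 (Set.mem_univ (πhat (x (n + 1), a n)))
      (Set.mem_univ (π (x (n + 1), a n))) hβ0 hβ1 (by ring)
    rw [← hπ', ← ha, smul_eq_mul, smul_eq_mul] at hc
    have hl := (le_abs_self _).trans (hlip (a' (n + 1)) (π' (x (n + 1), a n)))
    rw [ha' n] at hl ⊢
    have h1 := (hlipπ' (x (n + 1)) (a' n) (a n)).trans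
      (mul_le_mul_of_nonneg_left (hdev n (by omega)) hγ0.le)
    have h2 := mul_le_mul_of_nonneg_left h1 hL0
    have h3 : L * (γ * (β * ε / (1 - γ))) = β * δ := by
      rw [hδ]; ring
    linarith
  have hsum := Finset.sum_le_sum hstep
  rw [Finset.sum_add_distrib, Finset.sum_add_distrib, ← Finset.mul_sum, ← Finset.mul_sum,
    Finset.sum_const, Nat.card_Icc, Nat.add_sub_cancel, nsmul_eq_mul] at hsum
  have hTpos : (0 : ℝ) < T := by exact_mod_cast hT
  have hs := mul_le_mul_of_nonneg_left hsum (by positivity : (0 : ℝ) ≤ 1 / T)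
  have hTT : (1 / T : ℝ) * (T * (β * δ)) = β * δ := by field_simp
  have hmain : (1 / T : ℝ) * ∑ t ∈ Finset.Icc 1 T, ℓ (a' t)
      - (1 / T : ℝ) * ∑ t ∈ Finset.Icc 1 T, ℓ (a t) ≤ -(β * (Δ - δ)) := by
    have e : β * Δ = β * ((1 / T : ℝ) * ∑ t ∈ Finset.Icc 1 T, ℓ (a t)
      - (1 / T : ℝ) * ∑ t ∈ Finset.Icc 1 T, ℓ (πhat (x t, a (t - 1)))) := by rw [← hΔ]
    linarith
  refine hmain.trans (neg_le_neg ?_)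
  have e : β * (Δ - δ) = (Δ - δ) ^ 2 / (2 * Δ) := by rw [hβ]; ring
  rw [e]
  exact div_le_div_of_nonneg_left (sq_nonneg _) (by linarith) (by linarith)
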